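/- arXiv:1211.5952 — 6 statements merged into one kernel-verified Lean document; each statement's English description precedes it below -/
import Mathlib

section
/- Consider Λ₂ and its mod 2 reduction (ℤ/2)³ with the induced ℤ/2-valued pairing. If A ∈ (ℤ/2)³ is nonzero and there exist exceptional classes F₁, F₂ ∈ Λ₂ with F₁ ≠ F₂, ⟨F₁,F₂⟩ = 0, and the mod 2 pairing of A with the reduction of each F_i equal to 0, then A is the mod 2 reduction of H. In other words, the reduction of H is the unique nonzero K₀-Lagrangian RP² class in CP²#2·CP̄². -/
/-!
A class `(d, a, b) ∈ Λ₂` is exceptional iff `a + b = 1 - 3 d` and `a² + b² = d² + 1`. The inequality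
`(a + b)² ≤ 2 (a² + b²)` then gives `(7 d + 1) (d - 1) ≤ 0`, so `d ∈ {0, 1}` and the only exceptional
classes are `E₁`, `E₂` and `H - E₁ - E₂`. The last one pairs to `1` with each of the first two, so two
distinct orthogonal exceptional classes must be `E₁` and `E₂`. A mod 2 class orthogonal to both is a
multiple of the reduction of `H`.
-/

/-- The intersection pairing on `Λ_k = ℤ^{k+1}`:
`⟨x,y⟩ = x₀y₀ − Σ_{i=1}^k x_i y_i`. -/
def pairing (k : ℕ) (x y : Fin (k + 1) → ℤ) : ℤ :=
  x 0 * y 0 - ∑ i : Fin k, x i.succ * y i.succ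

/-- The line class `H`. -/
def Hcl (k : ℕ) : Fin (k + 1) → ℤ := fun i => if i = 0 then 1 else 0

/-- The exceptional basis class `E_{j+1}` (zero-indexed: `Ecl k j` is `E_{j+1}`). -/
def Ecl (k : ℕ) (j : Fin k) : Fin (k + 1) → ℤ := fun i => if i = j.succ then 1 else 0

/-- The standard canonical class `K₀ = −3H + E₁ + ⋯ + E_k`. -/
def Kcl (k : ℕ) : Fin (k + 1) → ℤ := fun i => if i = 0 then -3 else 1

/-- The reflection `R_L(x) = x + ⟨x,L⟩·L`. -/
def reflL (k : ℕ) (L : Fin (k + 1) → ℤ) : (Fin (k + 1) → ℤ) → (Fin (k + 1) → ℤ) :=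
  fun x => x + pairing k x L • L

/-- A class `C ∈ Λ_k` is exceptional if `⟨C,C⟩ = −1` and `⟨K₀,C⟩ = −1`. -/
def IsExceptional (k : ℕ) (C : Fin (k + 1) → ℤ) : Prop :=
  pairing k C C = -1 ∧ pairing k (Kcl k) C = -1

/-- The mod 2 reduction `Λ_k → Λ_k ⊗ ℤ/2`. -/
def redMod2 (k : ℕ) (x : Fin (k + 1) → ℤ) : Fin (k + 1) → ZMod 2 :=
  fun i => (x i : ZMod 2)

/-- The induced `ℤ/2`-valued intersection pairing on `Λ_k ⊗ ℤ/2`. -/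
def pairing2 (k : ℕ) (x y : Fin (k + 1) → ZMod 2) : ZMod 2 :=
  x 0 * y 0 - ∑ i : Fin k, x i.succ * y i.succ

/-- The exceptional classes of `Λ₂` are `E₁`, `E₂` and `H - E₁ - E₂`. -/
lemma exceptional_two {F : Fin 3 → ℤ} (hF : IsExceptional 2 F) :
    F = ![0, 1, 0] ∨ F = ![0, 0, 1] ∨ F = ![1, -1, -1] := by
  obtain ⟨h1, h2⟩ := hF
  simp [pairing, Kcl, Fin.sum_univ_two] at h1 h2
  have key : ∀ d a b : ℤ, d * d - (a * a + b * b) = -1 → b = 1 - 3 * d - a →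
      (d = 0 ∧ a = 1 ∧ b = 0) ∨ (d = 0 ∧ a = 0 ∧ b = 1) ∨ (d = 1 ∧ a = -1 ∧ b = -1) := by
    intro d a b h hb
    have hsq : (7 * d + 1) * (d - 1) ≤ 0 := by
      subst hb
      nlinarith [sq_nonneg (a - (1 - 3 * d - a))]
    have hd0 : 0 ≤ d := by
      by_contra hneg
      nlinarith
    have hd1 : d ≤ 1 := by
      by_contra hneg
      nlinarith
    subst hb
    interval_cases d
    · have ha : a * (a - 1) = 0 := by linarith
      rcases mul_eq_zero.mp ha with ha | ha <;> omega
    · have ha : (a + 1) ^ 2 = 0 := by linarith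
      have := pow_eq_zero_iff (two_ne_zero) |>.mp ha
      omega
  have hF : F = ![F 0, F 1, F 2] := by
    ext i; fin_cases i <;> rfl
  rcases key (F 0) (F 1) (F 2) (by linarith) (by linarith) with ⟨h, h', h''⟩ | ⟨h, h', h''⟩ | ⟨h, h', h''⟩ <;>
    rw [h, h', h''] at hF <;> simp [hF]

theorem stmt6 (A : Fin 3 → ZMod 2) (hA : A ≠ 0)
    (h : ∃ F₁ F₂ : Fin 3 → ℤ,
      IsExceptional 2 F₁ ∧ IsExceptional 2 F₂ ∧ F₁ ≠ F₂ ∧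
      pairing 2 F₁ F₂ = 0 ∧
      pairing2 2 A (redMod2 2 F₁) = 0 ∧ pairing2 2 A (redMod2 2 F₂) = 0) :
    A = redMod2 2 (Hcl 2) := by
  obtain ⟨F₁, F₂, e₁, e₂, hne, h12, h1, h2⟩ := h
  have hA12 : A 1 = 0 ∧ A 2 = 0 := by
    rcases exceptional_two e₁ with rfl | rfl | rfl <;>
    rcases exceptional_two e₂ with rfl | rfl | rfl <;>
    simp_all [pairing, pairing2, redMod2, Fin.sum_univ_two]
  obtain ⟨ha1, ha2⟩ := hA12
  have h0 : A 0 ≠ 0 := by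
    intro h0
    apply hA
    ext i; fin_cases i <;> simp [h0, ha1, ha2]
  have h0' : A 0 = 1 := by
    generalize A 0 = x at h0
    revert x
    decide
  ext i; fin_cases i <;> simp [redMod2, Hcl, h0', ha1, ha2]
end

section
/- Let k ≥ 1 and let A ∈ Λ_k ⊗ ℤ/2 be a nonzero class admitting a ℤ₂-orthogonal system, i.e. there exist k pairwise orthogonal exceptional classes F₁, …, F_k ∈ Λ_k whose mod 2 reductions all pair to 0 with A under the mod 2 pairing. Then there is an element g of the Cremona group of Λ_k whose mod 2 reduction sends A to the mod 2 reduction of H. In other words, every K₀-Lagrangian RP² class is Cremona equivalent to the ℤ₂-reduction of H. -/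
/-- The generating Cremona reflections: `R_L` for `L = H − E_i − E_j − E_l`
(distinct `i,j,l`) and `L = E_i − E_j` (`i ≠ j`). -/
def CremonaGens (k : ℕ) : Set (Function.End (Fin (k + 1) → ℤ)) :=
  {f | (∃ i j l : Fin k, i ≠ j ∧ i ≠ l ∧ j ≠ l ∧
          f = reflL k (Hcl k - Ecl k i - Ecl k j - Ecl k l)) ∨
       (∃ i j : Fin k, i ≠ j ∧ f = reflL k (Ecl k i - Ecl k j))}

/-- The Cremona group of `Λ_k`, as the submonoid of `Function.End` generated by the
Cremona reflections (each generator is an involution, so this closure is a group). -/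
def CremonaGroup (k : ℕ) : Submonoid (Function.End (Fin (k + 1) → ℤ)) :=
  Submonoid.closure (CremonaGens k)

/-! ### The integral pairing -/

lemma pairing_comm' (k : ℕ) (x y : Fin (k + 1) → ℤ) : pairing k x y = pairing k y x := by
  simp [pairing, mul_comm]

lemma pairing_sub_left (k : ℕ) (x y z : Fin (k + 1) → ℤ) :
    pairing k (x - y) z = pairing k x z - pairing k y z := by
  simp only [pairing, Pi.sub_apply, sub_mul, Finset.sum_sub_distrib]
  ring

lemma pairing_sum_left (k : ℕ) (F : Fin k → Fin (k + 1) → ℤ) (z : Fin (k + 1) → ℤ) :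
    pairing k (∑ i, F i) z = ∑ i, pairing k (F i) z := by
  simp only [pairing, Finset.sum_apply, Finset.sum_mul, Finset.sum_sub_distrib]
  rw [Finset.sum_comm]

lemma pairing_K_K (k : ℕ) : pairing k (Kcl k) (Kcl k) = 9 - k := by
  simp [pairing, Kcl, Fin.succ_ne_zero]

/-- The class `∑ Fᵢ - K₀`; for an orthogonal system it is three times the class playing the role
of `H`. -/
def tripleLine (k : ℕ) (F : Fin k → Fin (k + 1) → ℤ) : Fin (k + 1) → ℤ := ∑ i, F i - Kcl k

lemma pairing_tripleLine (k : ℕ) (F : Fin k → Fin (k + 1) → ℤ)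
    (hexc : ∀ i, IsExceptional k (F i))
    (horth : ∀ i j, i ≠ j → pairing k (F i) (F j) = 0) (j : Fin k) :
    pairing k (tripleLine k F) (F j) = 0 := by
  rw [tripleLine, pairing_sub_left, pairing_sum_left, (hexc j).2,
    Finset.sum_eq_single j (fun i _ hi => horth i j hi) (by simp), (hexc j).1]
  rfl

lemma pairing_tripleLine_self (k : ℕ) (F : Fin k → Fin (k + 1) → ℤ)
    (hexc : ∀ i, IsExceptional k (F i))
    (horth : ∀ i j, i ≠ j → pairing k (F i) (F j) = 0) :
    pairing k (tripleLine k F) (tripleLine k F) = 9 := by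
  have h1 : pairing k (∑ i, F i) (tripleLine k F) = 0 := by
    rw [pairing_sum_left]
    exact Finset.sum_eq_zero fun i _ => by
      rw [pairing_comm', pairing_tripleLine k F hexc horth]
  have h2 : pairing k (Kcl k) (tripleLine k F) = -9 := by
    rw [pairing_comm', tripleLine, pairing_sub_left, pairing_sum_left, pairing_K_K]
    simp only [fun i => (pairing_comm' k (F i) (Kcl k)).trans (hexc i).2]
    simp only [Finset.sum_const, Finset.card_univ, Fintype.card_fin, nsmul_eq_mul]
    ring
  conv_lhs => enter [2]; rw [tripleLine]
  rw [pairing_sub_left, h1, h2]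
  rfl

/-! ### Reduction modulo 2 -/

lemma pairing2_red (k : ℕ) (x y : Fin (k + 1) → ℤ) :
    pairing2 k (redMod2 k x) (redMod2 k y) = (pairing k x y : ZMod 2) := by
  simp [pairing2, redMod2, pairing]

lemma pairing2_eq_dotProduct (k : ℕ) (x y : Fin (k + 1) → ZMod 2) :
    pairing2 k x y = dotProduct x y := by
  rw [pairing2, dotProduct, Fin.sum_univ_succ, CharTwo.sub_eq_add]

/-- The reductions of `T, F₁, …, F_k` form an orthonormal basis, so the expansion of `A` in it
has a single possibly nonzero coefficient, that of `T`. -/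
lemma eq_red_of_orthogonal (k : ℕ) (A : Fin (k + 1) → ZMod 2) (hA : A ≠ 0)
    (F : Fin k → Fin (k + 1) → ℤ) (hexc : ∀ i, IsExceptional k (F i))
    (horth : ∀ i j, i ≠ j → pairing k (F i) (F j) = 0)
    (hA0 : ∀ i, pairing2 k A (redMod2 k (F i)) = 0) :
    A = redMod2 k (tripleLine k F) := by
  let G : Fin (k + 1) → Fin (k + 1) → ℤ := Fin.cons (tripleLine k F) F
  let M : Matrix (Fin (k + 1)) (Fin (k + 1)) (ZMod 2) := Matrix.of fun i => redMod2 k (G i)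
  have hM : M * M.transpose = 1 := by
    ext i j
    have h : (M * M.transpose) i j = (pairing k (G i) (G j) : ZMod 2) := by
      rw [← pairing2_red, pairing2_eq_dotProduct]
      rfl
    rw [h]
    refine Fin.cases ?_ (fun i => ?_) i <;> refine Fin.cases ?_ (fun j => ?_) j
    · simp only [G, Fin.cons_zero, pairing_tripleLine_self k F hexc horth, Matrix.one_apply_eq]
      decide
    · simp [G, pairing_tripleLine k F hexc horth, (Fin.succ_ne_zero _).symm]
    · simp [G, pairing_comm' k (F i), pairing_tripleLine k F hexc horth, Fin.succ_ne_zero]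
    · by_cases hij : i = j
      · subst hij
        simp [G, (hexc i).1]
      · simp [G, horth i j hij, hij]
  have hM' : M.transpose * M = 1 := mul_eq_one_comm.mp hM
  have hMA : M.mulVec A = Fin.cons (pairing2 k A (redMod2 k (tripleLine k F))) 0 := by
    ext i
    have h : M.mulVec A i = pairing2 k A (redMod2 k (G i)) := by
      rw [pairing2_eq_dotProduct, dotProduct_comm]
      rfl
    rw [h]
    refine Fin.cases ?_ (fun i => ?_) i
    · simp [G]
    · simp [G, hA0]
  have hexp : A = pairing2 k A (redMod2 k (tripleLine k F)) • redMod2 k (tripleLine k F) := by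
    conv_lhs => rw [← Matrix.one_mulVec A, ← hM', ← Matrix.mulVec_mulVec, hMA]
    ext p
    simp [Matrix.mulVec, dotProduct, Fin.sum_univ_succ, M, G, mul_comm]
  have h01 : ∀ c : ZMod 2, c = 0 ∨ c = 1 := by decide
  rcases h01 (pairing2 k A (redMod2 k (tripleLine k F))) with hc | hc
  · rw [hc, zero_smul] at hexp
    exact absurd hexp hA
  · rwa [hc, one_smul] at hexp

/-- The class in `Λ_k ⊗ ℤ/2` whose `H`-coefficient is `a` and in which `E_i` occurs exactly
when `i ∈ S`. -/
def vec {k : ℕ} (a : ZMod 2) (S : Finset (Fin k)) : Fin (k + 1) → ZMod 2 :=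
  Fin.cons a fun i => if i ∈ S then 1 else 0

lemma eq_vec {k : ℕ} (A : Fin (k + 1) → ZMod 2) :
    A = vec (A 0) (Finset.univ.filter fun i : Fin k => A i.succ = 1) := by
  have h01 : ∀ c : ZMod 2, c = if c = 1 then 1 else 0 := by decide
  ext p
  refine Fin.cases ?_ (fun i => ?_) p
  · simp [vec]
  · simpa [vec] using h01 (A i.succ)

/-- The square of an integral class modulo 4 is determined by its reduction modulo 2. -/
lemma pairing_self_mod_four (k : ℕ) (x : Fin (k + 1) → ℤ) (a : ZMod 2) (S : Finset (Fin k))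
    (h : redMod2 k x = vec a S) :
    pairing k x x ≡ (if a = 1 then 1 else 0) - S.card [ZMOD 4] := by
  have hsq : ∀ (n : ℤ) (c : ZMod 2), (n : ZMod 2) = c → n * n ≡ if c = 1 then 1 else 0 [ZMOD 4] := by
    rintro n c rfl
    rcases Int.even_or_odd' n with ⟨m, rfl | rfl⟩
    · have : ((2 * m : ℤ) : ZMod 2) = 0 := by
        rw [ZMod.intCast_zmod_eq_zero_iff_dvd _ 2 |>.mpr]; exact ⟨m, rfl⟩
      rw [this, if_neg (by decide)]
      exact Int.modEq_zero_iff_dvd.mpr ⟨m * m, by ring⟩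
    · have : ((2 * m + 1 : ℤ) : ZMod 2) = 1 := by
        have : (2 : ZMod 2) = 0 := rfl
        push_cast
        rw [this]; ring
      rw [this, if_pos rfl]
      exact (Int.modEq_iff_dvd.mpr ⟨m * m + m, by ring⟩).symm
  refine Int.ModEq.sub (hsq _ _ (congrFun h 0)) ?_
  have hcard : (S.card : ℤ) = ∑ i : Fin k, if i ∈ S then 1 else 0 := by simp
  rw [hcard]
  refine Int.ModEq.sum fun i _ => ?_
  have := hsq _ _ (congrFun h i.succ)
  by_cases hi : i ∈ S <;> simpa [vec, hi] using this

/-! ### Cremona moves modulo 2 -/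

/-- Some Cremona transformation sends every integral lift of `A` to a lift of the reduction
of `H`. -/
def CremonaReducible (k : ℕ) (A : Fin (k + 1) → ZMod 2) : Prop :=
  ∃ g ∈ CremonaGroup k, ∀ x : Fin (k + 1) → ℤ, redMod2 k x = A →
    redMod2 k (g x) = redMod2 k (Hcl k)

lemma red_root {k : ℕ} {i j l : Fin k} (hij : i ≠ j) (hil : i ≠ l) (hjl : j ≠ l) :
    redMod2 k (Hcl k - Ecl k i - Ecl k j - Ecl k l) = vec 1 {i, j, l} := by
  have h1 : (-1 : ZMod 2) = 1 := rfl
  ext p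
  refine Fin.cases ?_ (fun p => ?_) p
  · simp [redMod2, vec, Hcl, Ecl, (Fin.succ_ne_zero _).symm]
  · by_cases hi : p = i
    · subst hi; simp [redMod2, vec, Hcl, Ecl, hij, hil, h1]
    · by_cases hj : p = j
      · subst hj; simp [redMod2, vec, Hcl, Ecl, hi, hjl, h1]
      · by_cases hl : p = l
        · subst hl; simp [redMod2, vec, Hcl, Ecl, hi, hj, h1]
        · simp [redMod2, vec, Hcl, Ecl, hi, hj, hl]

lemma pairing2_vec_triple {k : ℕ} (A : Fin (k + 1) → ZMod 2) {i j l : Fin k} (hij : i ≠ j)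
    (hil : i ≠ l) (hjl : j ≠ l) :
    pairing2 k A (vec 1 {i, j, l}) = A 0 + (A i.succ + (A j.succ + A l.succ)) := by
  have : ∑ p : Fin k, A p.succ * (vec 1 {i, j, l} : Fin (k + 1) → ZMod 2) p.succ
      = ∑ p ∈ ({i, j, l} : Finset (Fin k)), A p.succ := by
    simp only [vec, Fin.cons_succ, mul_ite, mul_one, mul_zero]
    rw [Finset.sum_ite_mem, Finset.univ_inter]
  rw [pairing2, this, CharTwo.sub_eq_add, Finset.sum_insert (by simp [hij, hil]),
    Finset.sum_pair hjl]
  simp [vec]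

/-- A class pairing to 1 with the root `H - E_i - E_j - E_l` may be replaced by its sum with that
root. -/
lemma CremonaReducible.step {k : ℕ} {A B : Fin (k + 1) → ZMod 2} {i j l : Fin k} (hij : i ≠ j)
    (hil : i ≠ l) (hjl : j ≠ l) (hodd : A 0 + (A i.succ + (A j.succ + A l.succ)) = 1)
    (hAB : A + vec 1 {i, j, l} = B) (hB : CremonaReducible k B) : CremonaReducible k A := by
  obtain ⟨g, hg, h⟩ := hB
  let r : Function.End (Fin (k + 1) → ℤ) := reflL k (Hcl k - Ecl k i - Ecl k j - Ecl k l)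
  refine ⟨g * r, mul_mem hg (Submonoid.subset_closure (Or.inl ⟨i, j, l, hij, hil, hjl, rfl⟩)), ?_⟩
  intro x hx
  refine h _ ?_
  rw [← hAB, ← red_root hij hil hjl]
  have hp : (pairing k x (Hcl k - Ecl k i - Ecl k j - Ecl k l) : ZMod 2) = 1 := by
    rw [← pairing2_red, hx, red_root hij hil hjl, pairing2_vec_triple _ hij hil hjl, hodd]
  ext p
  have hxp : (x p : ZMod 2) = A p := congrFun hx p
  simp only [redMod2, r, reflL, Pi.add_apply, Pi.smul_apply, smul_eq_mul, Int.cast_add, Int.cast_mul,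
    hp, one_mul, hxp]

lemma vec_add {k : ℕ} (a b : ZMod 2) (S U : Finset (Fin k)) :
    vec a S + vec b U = vec (a + b) (symmDiff S U) := by
  have h1 : (1 + 1 : ZMod 2) = 0 := rfl
  ext p
  refine Fin.cases ?_ (fun p => ?_) p
  · simp [vec]
  · by_cases hS : p ∈ S <;> by_cases hU : p ∈ U <;> simp [vec, Finset.mem_symmDiff, hS, hU, h1]

lemma reducible_vec {k : ℕ} (n : ℕ) : ∀ (a : ZMod 2) (S : Finset (Fin k)), S.card = n →
    (a = 1 ∧ n % 4 = 0 ∧ (n = 0 ∨ n < k) ∨ a = 0 ∧ n % 4 = 3) → CremonaReducible k (vec a S) := by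
  induction n using Nat.strong_induction_on with
  | _ n ih =>
  rintro a S hS (⟨rfl, hn4, hnk⟩ | ⟨rfl, hn4⟩)
  · rcases Nat.eq_zero_or_pos n with hn | hn
    · rw [hn, Finset.card_eq_zero] at hS
      subst hS
      refine ⟨1, one_mem _, fun x hx => ?_⟩
      change redMod2 k x = _
      rw [hx]
      ext p
      refine Fin.cases ?_ (fun p => ?_) p <;> simp [vec, redMod2, Hcl]
    · obtain ⟨i, hi, j, hj, hij⟩ := Finset.one_lt_card.mp (show 1 < S.card by omega)
      obtain ⟨l, hl⟩ : ∃ l, l ∉ S := by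
        by_contra! hall
        have := Finset.card_eq_iff_eq_univ S |>.mpr (Finset.eq_univ_iff_forall.mpr hall)
        rw [Fintype.card_fin] at this
        omega
      have hil : i ≠ l := fun h => hl (h ▸ hi)
      have hjl : j ≠ l := fun h => hl (h ▸ hj)
      have hsd : symmDiff S {i, j, l} = insert l (S \ {i, j}) := by
        ext p
        simp only [Finset.mem_symmDiff, Finset.mem_insert, Finset.mem_singleton, Finset.mem_sdiff]
        grind
      refine CremonaReducible.step hij hil hjl ?_ (vec_add _ _ _ _) ?_
      · simp only [vec, Fin.cons_zero, Fin.cons_succ, hi, hj, hl]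
        decide
      · rw [hsd]
        have hc : (insert l (S \ {i, j})).card = n - 1 := by
          rw [Finset.card_insert_of_notMem (by simp [hl]), Finset.card_sdiff_of_subset
            (by simp [Finset.insert_subset_iff, hi, hj]), Finset.card_pair hij, hS]
          omega
        exact ih (n - 1) (by omega) _ _ hc (Or.inr ⟨rfl, by omega⟩)
  · obtain ⟨U, hU, hUc⟩ := Finset.exists_subset_card_eq (show 3 ≤ S.card by omega)
    obtain ⟨i, j, l, hij, hil, hjl, rfl⟩ := Finset.card_eq_three.mp hUc
    have hi : i ∈ S := hU (by simp)
    have hj : j ∈ S := hU (by simp)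
    have hl : l ∈ S := hU (by simp)
    refine CremonaReducible.step hij hil hjl ?_ (vec_add _ _ _ _) ?_
    · simp only [vec, Fin.cons_zero, Fin.cons_succ, hi, hj, hl]
      decide
    · have hc : (symmDiff S {i, j, l}).card = n - 3 := by
        rw [symmDiff_of_ge hU, Finset.card_sdiff_of_subset hU, hUc, hS]
      have hk : S.card ≤ k := by simpa using S.card_le_univ
      exact ih (n - 3) (by omega) _ _ hc (Or.inl ⟨rfl, by omega, by omega⟩)

theorem stmt10 (k : ℕ) (hk : 1 ≤ k) (A : Fin (k + 1) → ZMod 2) (hA : A ≠ 0)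
    (F : Fin k → (Fin (k + 1) → ℤ))
    (hexc : ∀ i, IsExceptional k (F i))
    (hne : ∀ i j, i ≠ j → F i ≠ F j)
    (horth : ∀ i j, i ≠ j → pairing k (F i) (F j) = 0)
    (hA0 : ∀ i, pairing2 k A (redMod2 k (F i)) = 0) :
    ∃ g ∈ CremonaGroup k,
      ∀ Atilde : Fin (k + 1) → ℤ, redMod2 k Atilde = A →
        redMod2 k (g Atilde) = redMod2 k (Hcl k) := by
  change CremonaReducible k A
  have hAT := eq_red_of_orthogonal k A hA F hexc horth hA0
  obtain ⟨a, S, rfl⟩ : ∃ a S, A = vec a S := ⟨_, _, eq_vec A⟩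
  have hmod := pairing_self_mod_four k _ a S hAT.symm
  rw [pairing_tripleLine_self k F hexc horth] at hmod
  have hle : S.card ≤ k := by simpa using S.card_le_univ
  have h01 : ∀ c : ZMod 2, c = 0 ∨ c = 1 := by decide
  refine reducible_vec S.card a S rfl ?_
  rcases h01 a with rfl | rfl
  · rw [if_neg (by decide)] at hmod
    exact Or.inr ⟨rfl, by unfold Int.ModEq at hmod; omega⟩
  · rw [if_pos rfl] at hmod
    refine Or.inl ⟨rfl, by unfold Int.ModEq at hmod; omega, Or.inr (lt_of_le_of_ne hle ?_)⟩
    -- Otherwise the class is the reduction of `K₀`, which pairs to an odd number with `F₁`.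
    intro hfull
    have hSu : S = Finset.univ := (Finset.card_eq_iff_eq_univ S).mp (by simpa using hfull)
    have hK : vec 1 S = redMod2 k (Kcl k) := by
      ext p
      refine Fin.cases ?_ (fun p => ?_) p
      · simp only [vec, Fin.cons_zero, redMod2, Kcl, if_true]
        decide
      · simp [vec, redMod2, Kcl, hSu, Fin.succ_ne_zero]
    have := hA0 ⟨0, hk⟩
    rw [hK, pairing2_red, (hexc _).2] at this
    exact absurd this (by decide)
end

section
/- In Λ₆ there are exactly two sets of 6 pairwise orthogonal exceptional classes all of whose members have even pairing with H (i.e. are ℤ₂-orthogonal to the mod 2 reduction of H): the set {E₁, …, E₆} and the set {2H − Σ_{j≠i} E_j : i = 1, …, 6}, the latter being the image of the former under the Cremona reflection along 2H − E₁ − ⋯ − E₆. -/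
/-- A `ℤ₂`-orthogonal system for `H` in `Λ_k`: a set of `k` pairwise orthogonal
exceptional classes all of whose members have even pairing with `H`. -/
def OrthSystemH (k : ℕ) (S : Finset (Fin (k + 1) → ℤ)) : Prop :=
  S.card = k ∧ (∀ C ∈ S, IsExceptional k C) ∧
    (∀ C ∈ S, ∀ D ∈ S, C ≠ D → pairing k C D = 0) ∧
    (∀ C ∈ S, (2 : ℤ) ∣ pairing k (Hcl k) C)

/-- The standard set `{E₁, …, E_k}` of exceptional classes. -/
def Ebasis (k : ℕ) : Finset (Fin (k + 1) → ℤ) :=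
  Finset.image (Ecl k) Finset.univ

/-- The set `{2H − Σ_{j≠i} E_j : i = 1,…,6}` in `Λ₆`. -/
def Twisted6 : Finset (Fin 7 → ℤ) :=
  Finset.image (fun i : Fin 6 => 2 • Hcl 6 - ∑ j ∈ Finset.univ.erase i, Ecl 6 j)
    Finset.univ

/-- The conic class `T_i = 2H - Σ_{j≠i} E_j` in `Λ₆`, with `i` zero-indexed. -/
def Tcl (i : Fin 6) : Fin 7 → ℤ := 2 • Hcl 6 - ∑ j ∈ Finset.univ.erase i, Ecl 6 j

theorem Twisted6_eq : Twisted6 = Finset.image Tcl Finset.univ := rfl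

theorem Tcl_zero (i : Fin 6) : Tcl i 0 = 2 := by
  revert i; decide +kernel

theorem Tcl_succ (i j : Fin 6) : Tcl i j.succ = if j = i then 0 else -1 := by
  revert i j; decide +kernel

theorem pairing_E_T (i j : Fin 6) : pairing 6 (Ecl 6 i) (Tcl j) = if i = j then 0 else 1 := by
  revert i j; decide +kernel

theorem pairing_T_E (i j : Fin 6) : pairing 6 (Tcl i) (Ecl 6 j) = if i = j then 0 else 1 := by
  revert i j; decide +kernel

theorem Ecl_ne_Tcl (i j : Fin 6) : Ecl 6 i ≠ Tcl j := by
  revert i j; decide +kernel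

/-- An integer vector with coordinate sum and squared length both equal to `1` is a standard basis
vector: `Σ (w_i² - w_i) = 0` is a sum of nonnegative integers, so all `w_i` are `0` or `1`. -/
theorem eq_single_of_sum {n : ℕ} (w : Fin n → ℤ) (h1 : ∑ i, w i = 1) (h2 : ∑ i, w i ^ 2 = 1) :
    ∃ i, ∀ j, w j = if j = i then 1 else 0 := by
  have hnn : ∀ i ∈ Finset.univ, 0 ≤ w i ^ 2 - w i := fun i _ => by
    rcases le_or_gt (w i) 0 with h | h <;> nlinarith
  have h0 : ∑ i, (w i ^ 2 - w i) = 0 := by rw [Finset.sum_sub_distrib, h1, h2, sub_self]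
  have h01 : ∀ i, w i = 0 ∨ w i = 1 := fun i => by
    have h := (Finset.sum_eq_zero_iff_of_nonneg hnn).1 h0 i (Finset.mem_univ i)
    have h' : w i * (w i - 1) = 0 := by linarith
    rcases mul_eq_zero.1 h' with h | h
    · exact Or.inl h
    · exact Or.inr (by linarith)
  obtain ⟨i, -, hi⟩ : ∃ i ∈ Finset.univ, w i ≠ 0 :=
    Finset.exists_ne_zero_of_sum_ne_zero (by rw [h1]; exact one_ne_zero)
  have hi1 : w i = 1 := (h01 i).resolve_left hi
  rw [← Finset.add_sum_erase _ _ (Finset.mem_univ i), hi1] at h1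
  have hnn' : ∀ j ∈ Finset.univ.erase i, 0 ≤ w j := fun j _ => by
    rcases h01 j with h | h <;> omega
  have hrest := (Finset.sum_eq_zero_iff_of_nonneg hnn').1 (by linarith)
  refine ⟨i, fun j => ?_⟩
  split_ifs with hj
  · rw [hj, hi1]
  · exact hrest j (Finset.mem_erase.2 ⟨hj, Finset.mem_univ j⟩)

/-- The exceptional classes of `Λ₆` of even degree are the `E_i` and the `T_i`. -/
theorem even_exceptional (C : Fin 7 → ℤ) (hC : IsExceptional 6 C)
    (he : (2 : ℤ) ∣ pairing 6 (Hcl 6) C) : (∃ i, C = Ecl 6 i) ∨ ∃ i, C = Tcl i := by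
  obtain ⟨hsq, hK⟩ := hC
  have hd : (2 : ℤ) ∣ C 0 := by simpa [pairing, Hcl] using he
  have hs : ∑ i : Fin 6, C i.succ = 1 - 3 * C 0 := by
    simp only [pairing, Kcl, Fin.succ_ne_zero, if_true, if_false, one_mul] at hK
    linarith
  have hq : ∑ i : Fin 6, C i.succ ^ 2 = 1 + C 0 ^ 2 := by
    simp only [pairing, ← sq] at hsq
    linarith
  have hcs : (∑ i : Fin 6, C i.succ) ^ 2 ≤ 6 * ∑ i : Fin 6, C i.succ ^ 2 := by
    simpa using sq_sum_le_card_mul_sum_sq (s := Finset.univ) (f := fun i : Fin 6 => C i.succ)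
  rw [hs, hq] at hcs
  have hlo : 0 ≤ C 0 := by nlinarith
  have hhi : C 0 ≤ 2 := by nlinarith
  have h02 : C 0 = 0 ∨ C 0 = 2 := by omega
  rcases h02 with h | h <;> rw [h] at hs hq
  · obtain ⟨i, hi⟩ := eq_single_of_sum (fun i : Fin 6 => C i.succ)
      (by simpa using hs) (by simpa using hq)
    refine Or.inl ⟨i, funext fun k => ?_⟩
    refine Fin.cases ?_ (fun j => ?_) k
    · simp [Ecl, h, (Fin.succ_ne_zero i).symm]
    · simpa [Ecl] using hi j
  · obtain ⟨i, hi⟩ := eq_single_of_sum (fun i : Fin 6 => C i.succ + 1)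
      (by rw [Finset.sum_add_distrib, hs]; simp)
      (by simp only [add_sq, mul_one, one_pow, Finset.sum_add_distrib, ← Finset.mul_sum, hs, hq]
          simp)
    refine Or.inr ⟨i, funext fun k => ?_⟩
    refine Fin.cases ?_ (fun j => ?_) k
    · rw [h, Tcl_zero]
    · rw [Tcl_succ]
      have := hi j
      split_ifs at this ⊢ <;> linarith

/-- A system cannot contain both some `E_i` and some `T_j`: orthogonality forces `j = i`, and a
third member `E_l` or `T_l` would have `l ≠ i`, so pair to `1` with `T_i` or with `E_i`. -/
theorem not_mixed (S : Finset (Fin 7 → ℤ)) (hS : OrthSystemH 6 S) (i j : Fin 6)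
    (hi : Ecl 6 i ∈ S) (hj : Tcl j ∈ S) : False := by
  obtain ⟨hcard, hex, horth, hev⟩ := hS
  have hij := horth _ hi _ hj (Ecl_ne_Tcl i j)
  rw [pairing_E_T] at hij
  obtain rfl : i = j := by
    by_contra h
    rw [if_neg h] at hij
    exact one_ne_zero hij
  obtain ⟨C, hCS, hC⟩ : ∃ C ∈ S, C ∉ ({Ecl 6 i, Tcl i} : Finset (Fin 7 → ℤ)) :=
    Finset.exists_mem_notMem_of_card_lt_card (by
      rw [hcard]; exact lt_of_le_of_lt Finset.card_le_two (by norm_num))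
  simp only [Finset.mem_insert, Finset.mem_singleton, not_or] at hC
  rcases even_exceptional C (hex C hCS) (hev C hCS) with ⟨l, rfl⟩ | ⟨l, rfl⟩
  · have hl : l ≠ i := fun h => hC.1 (by rw [h])
    have h := horth _ hCS _ hj hC.2
    rw [pairing_E_T, if_neg hl] at h
    exact one_ne_zero h
  · have hl : l ≠ i := fun h => hC.2 (by rw [h])
    have h := horth _ hCS _ hi hC.1
    rw [pairing_T_E, if_neg hl] at h
    exact one_ne_zero h

theorem orthSystem_Ebasis : OrthSystemH 6 (Ebasis 6) := by
  unfold OrthSystemH IsExceptional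
  decide +kernel

theorem orthSystem_Twisted6 : OrthSystemH 6 Twisted6 := by
  unfold OrthSystemH IsExceptional
  decide +kernel

theorem stmt11 :
    Ebasis 6 ≠ Twisted6 ∧
    (∀ S : Finset (Fin 7 → ℤ), OrthSystemH 6 S ↔ S = Ebasis 6 ∨ S = Twisted6) ∧
    Twisted6 = (Ebasis 6).image (reflL 6 (2 • Hcl 6 - ∑ i : Fin 6, Ecl 6 i)) := by
  refine ⟨by decide +kernel, fun S => ⟨fun hS => ?_, ?_⟩, by decide +kernel⟩
  · by_cases hE : ∃ i, Ecl 6 i ∈ S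
    · obtain ⟨i, hi⟩ := hE
      refine Or.inl (Finset.eq_of_subset_of_card_le (fun C hC => ?_) ?_)
      · rcases even_exceptional C (hS.2.1 C hC) (hS.2.2.2 C hC) with ⟨l, rfl⟩ | ⟨l, rfl⟩
        · exact Finset.mem_image_of_mem _ (Finset.mem_univ l)
        · exact (not_mixed S hS i l hi hC).elim
      · rw [hS.1, orthSystem_Ebasis.1]
    · refine Or.inr (Finset.eq_of_subset_of_card_le (fun C hC => ?_) ?_)
      · rcases even_exceptional C (hS.2.1 C hC) (hS.2.2.2 C hC) with ⟨l, rfl⟩ | ⟨l, rfl⟩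
        · exact (hE ⟨l, hC⟩).elim
        · rw [Twisted6_eq]
          exact Finset.mem_image_of_mem _ (Finset.mem_univ l)
      · rw [hS.1, orthSystem_Twisted6.1]
  · rintro (rfl | rfl)
    · exact orthSystem_Ebasis
    · exact orthSystem_Twisted6
end

section
/- In Λ₇ there are exactly 8 sets of 7 pairwise orthogonal exceptional classes all of whose members have even pairing with H: the set {E₁, …, E₇} together with its 7 images under the Cremona reflections along the classes 2H − (E₁ + ⋯ + E₇) + E_i for i = 1, …, 7. -/
/-- The class attached to the edge `{a, b}` of the complete graph on `{0, …, 7}`: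
`E_b` for `{0, b}`, and `2H − (E₁ + ⋯ + E₇) + E_a + E_b` if `a, b ≠ 0`. -/
def edgeClass (a b : Fin 8) : Fin 8 → ℤ := fun i =>
  if i = 0 then (if 0 = a ∨ 0 = b then 0 else 2)
  else (if i = a ∨ i = b then 1 else 0) - (if 0 = a ∨ 0 = b then 0 else 1)

/-- The set of the classes of the seven edges at the vertex `a`. -/
def star7 (a : Fin 8) : Finset (Fin 8 → ℤ) := (Finset.univ.erase a).image (edgeClass a)

lemma edgeClass_comm (a b : Fin 8) : edgeClass a b = edgeClass b a := by
  unfold edgeClass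
  simp only [or_comm]

lemma edgeClass_meet : ∀ a b c d : Fin 8, a ≠ b → c ≠ d →
    pairing 7 (edgeClass a b) (edgeClass c d) = 0 → a = c ∨ a = d ∨ b = c ∨ b = d := by
  decide +kernel

/-- Edges with the same class meet (in fact they are equal). -/
lemma edgeClass_eq : ∀ a b c d : Fin 8, a ≠ b → c ≠ d →
    edgeClass a b = edgeClass c d → a = c ∨ a = d ∨ b = c ∨ b = d := by
  decide +kernel

lemma star7_orth : ∀ a : Fin 8, OrthSystemH 7 (star7 a) := by
  unfold OrthSystemH IsExceptional
  decide +kernel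

lemma star7_injective : Function.Injective star7 := by
  have h : ∀ a b : Fin 8, star7 a = star7 b → a = b := by decide +kernel
  exact fun a b => h a b

lemma star7_zero : star7 0 = Ebasis 7 := by decide +kernel

lemma star7_succ : ∀ i : Fin 7, star7 i.succ = (Ebasis 7).image
    (reflL 7 (2 • Hcl 7 - (∑ j : Fin 7, Ecl 7 j) + Ecl 7 i)) := by decide +kernel

lemma mem_star {a b : Fin 8} (h : a ≠ b) : edgeClass a b ∈ star7 a :=
  Finset.mem_image_of_mem _ (by simp [h.symm])

/-- The degree of an exceptional class of `Λ₇` is between `0` and `3`; if it is the even number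
`2n`, the numbers `C i + n`, together with `1 - n` at the vertex `0`, form the indicator function
of an edge: they sum to `2`, as do their squares, so each is `0` or `1`. -/
lemma exists_edgeClass (C : Fin 8 → ℤ) (hC : IsExceptional 7 C)
    (hev : (2 : ℤ) ∣ pairing 7 (Hcl 7) C) : ∃ a b, a ≠ b ∧ C = edgeClass a b := by
  obtain ⟨h1, h2⟩ := hC
  obtain ⟨n, hn⟩ := hev
  have hn : C 0 = 2 * n := by simpa [pairing, Hcl] using hn
  simp only [pairing, Kcl, Fin.succ_ne_zero, if_true, if_false, one_mul] at h1 h2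
  rw [hn] at h1 h2
  have hcs := sq_sum_le_card_mul_sum_sq (s := Finset.univ) (f := fun i : Fin 7 => C i.succ)
  have e1 : ∑ i : Fin 7, C i.succ = 1 - 6 * n := by linarith
  have e2 : ∑ i : Fin 7, C i.succ ^ 2 = 4 * n ^ 2 + 1 := by
    simp only [pow_two] at h1 ⊢
    linarith
  simp only [e1, e2, Finset.card_univ, Fintype.card_fin] at hcs
  push_cast at hcs
  have hn01 : n = 0 ∨ n = 1 := by
    have : 0 ≤ n := by nlinarith
    have : n ≤ 1 := by nlinarith
    omega
  let y : Fin 8 → ℤ := Fin.cons (1 - n) fun i : Fin 7 => C i.succ + n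
  have y0 : y 0 = 1 - n := rfl
  have ys (i : Fin 7) : y i.succ = C i.succ + n := rfl
  have s1 : ∑ i, y i = 2 := by
    rw [Fin.sum_univ_succ]
    simp only [y0, ys, Finset.sum_add_distrib, e1, Finset.sum_const, Finset.card_univ,
      Fintype.card_fin, nsmul_eq_mul]
    push_cast
    ring
  have s2 : ∑ i, y i ^ 2 = 2 := by
    rw [Fin.sum_univ_succ]
    simp only [y0, ys, add_sq, Finset.sum_add_distrib, e2, ← Finset.sum_mul, ← Finset.mul_sum,
      e1, Finset.sum_const, Finset.card_univ, Fintype.card_fin, nsmul_eq_mul]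
    push_cast
    ring
  have hy (i : Fin 8) : y i = 0 ∨ y i = 1 := by
    have h0 : ∑ i, (y i ^ 2 - y i) = 0 := by rw [Finset.sum_sub_distrib, s1, s2, sub_self]
    have hpos (i : Fin 8) : 0 ≤ y i ^ 2 - y i := by
      rcases le_or_gt (y i) 0 with h | h <;> nlinarith
    have := (Finset.sum_eq_zero_iff_of_nonneg fun i _ => hpos i).1 h0 i (Finset.mem_univ i)
    have : y i * (y i - 1) = 0 := by linarith
    rcases mul_eq_zero.1 this with h | h
    · exact .inl h
    · exact .inr (by linarith)
  have hcard : (Finset.univ.filter fun i => y i = 1).card = 2 := by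
    have : (((Finset.univ.filter fun i => y i = 1).card : ℕ) : ℤ) = 2 := by
      rw [← s1, Finset.card_filter]
      push_cast
      exact Finset.sum_congr rfl fun i _ => by rcases hy i with h | h <;> simp [h]
    exact_mod_cast this
  obtain ⟨a, b, hab, hT⟩ := Finset.card_eq_two.1 hcard
  have hmem (i : Fin 8) : y i = 1 ↔ i = a ∨ i = b := by
    have := congrArg (fun s => i ∈ s) hT
    simpa using this
  have hval (i : Fin 8) : y i = if i = a ∨ i = b then 1 else 0 := by
    split_ifs with h
    · exact (hmem i).2 h
    · exact (hy i).resolve_right (mt (hmem i).1 h)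
  have hn' : n = if 0 = a ∨ 0 = b then 0 else 1 := by
    have := hval 0
    rw [y0] at this
    split_ifs at this ⊢ <;> linarith
  refine ⟨a, b, hab, funext fun i => ?_⟩
  refine Fin.cases ?_ (fun j => ?_) i
  · rw [hn, hn']
    unfold edgeClass
    split_ifs <;> simp_all
  · have := hval j.succ
    rw [ys] at this
    unfold edgeClass
    rw [if_neg (Fin.succ_ne_zero j), ← this, ← hn']
    ring

/-- Seven pairwise intersecting edges do not fit into a triangle, so they form a star. -/
lemma eq_star (S : Finset (Fin 8 → ℤ)) (hS : OrthSystemH 7 S) : ∃ a, S = star7 a := by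
  obtain ⟨hcard, hex, horth, hev⟩ := hS
  have hedge (C) (hC : C ∈ S) := exists_edgeClass C (hex C hC) (hev C hC)
  have hmeet (a b c d : Fin 8) (hab : a ≠ b) (hcd : c ≠ d) (h1 : edgeClass a b ∈ S)
      (h2 : edgeClass c d ∈ S) : a = c ∨ a = d ∨ b = c ∨ b = d := by
    by_cases h : edgeClass a b = edgeClass c d
    · exact edgeClass_eq a b c d hab hcd h
    · exact edgeClass_meet a b c d hab hcd (horth _ h1 _ h2 h)
  -- two different edges `{a, b}` and `{a, c}` of the family
  obtain ⟨a, b, c, hab, hac, hbc, hb, hc⟩ : ∃ a b c, a ≠ b ∧ a ≠ c ∧ b ≠ c ∧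
      edgeClass a b ∈ S ∧ edgeClass a c ∈ S := by
    obtain ⟨C, hC, D, hD, hCD⟩ := Finset.one_lt_card.1 (show 1 < S.card by omega)
    obtain ⟨a, b, hab, rfl⟩ := hedge C hC
    obtain ⟨c, d, hcd, rfl⟩ := hedge D hD
    rcases hmeet a b c d hab hcd hC hD with rfl | rfl | rfl | rfl
    · exact ⟨a, b, d, hab, hcd, by rintro rfl; exact hCD rfl, hC, hD⟩
    · exact ⟨a, b, c, hab, hcd.symm, by rintro rfl; exact hCD (edgeClass_comm _ _), hC,
        edgeClass_comm c a ▸ hD⟩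
    · exact ⟨b, a, d, hab.symm, hcd, by rintro rfl; exact hCD (edgeClass_comm _ _),
        edgeClass_comm a b ▸ hC, hD⟩
    · exact ⟨b, a, c, hab.symm, hcd.symm, by rintro rfl; exact hCD rfl,
        edgeClass_comm a b ▸ hC, edgeClass_comm c b ▸ hD⟩
  refine ⟨a, Finset.eq_of_subset_of_card_le (fun C hC => ?_) (by rw [hcard, (star7_orth a).1])⟩
  by_contra hCa
  obtain ⟨p, q, hpq, rfl⟩ := hedge C hC
  have hpa : p ≠ a := by rintro rfl; exact hCa (mem_star hpq)
  have hqa : q ≠ a := by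
    rintro rfl
    exact hCa (edgeClass_comm q p ▸ mem_star hpq.symm)
  -- an edge of the family that avoids `a` is `{b, c}`, and closes a triangle
  have hbcS : edgeClass b c ∈ S := by
    have h1 := hmeet a b p q hab hpq hb hC
    have h2 := hmeet a c p q hac hpq hc hC
    have : (b = p ∧ c = q) ∨ (b = q ∧ c = p) := by grind
    rcases this with ⟨rfl, rfl⟩ | ⟨rfl, rfl⟩
    · exact hC
    · exact edgeClass_comm c b ▸ hC
  have hsub : S ⊆ {edgeClass a b, edgeClass a c, edgeClass b c} := by
    intro D hD
    obtain ⟨r, s, hrs, rfl⟩ := hedge D hD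
    have h1 := hmeet a b r s hab hrs hb hD
    have h2 := hmeet a c r s hac hrs hc hD
    have h3 := hmeet b c r s hbc hrs hbcS hD
    have hcomm := edgeClass_comm r s
    simp only [Finset.mem_insert, Finset.mem_singleton]
    grind
  have := (Finset.card_le_card hsub).trans Finset.card_le_three
  omega

theorem stmt12 :
    {S : Finset (Fin 8 → ℤ) | OrthSystemH 7 S}.ncard = 8 ∧
    (∀ S : Finset (Fin 8 → ℤ), OrthSystemH 7 S ↔
      S = Ebasis 7 ∨
      ∃ i : Fin 7,
        S = (Ebasis 7).image
          (reflL 7 (2 • Hcl 7 - (∑ j : Fin 7, Ecl 7 j) + Ecl 7 i))) := by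
  have hiff (S : Finset (Fin 8 → ℤ)) : OrthSystemH 7 S ↔ ∃ a, S = star7 a :=
    ⟨eq_star S, by rintro ⟨a, rfl⟩; exact star7_orth a⟩
  constructor
  · have : {S : Finset (Fin 8 → ℤ) | OrthSystemH 7 S} = star7 '' Set.univ := by
      ext S
      simp [hiff, eq_comm]
    rw [this, Set.ncard_image_of_injective _ star7_injective, Set.ncard_univ, Nat.card_fin]
  · intro S
    rw [hiff, Fin.exists_fin_succ, star7_zero]
    simp only [star7_succ]
end

section
/- For every integer k with 1 ≤ k ≤ 8, the number of sets of k pairwise orthogonal exceptional classes in Λ_k all of whose members have even pairing with H equals the number of sets of k pairwise orthogonal exceptional classes in Λ_{k+1} all of whose members pair to 0 with the class S = −H + 2E₁ − E₂. (This equality of counts of ℤ₂-orthogonal systems of H and push off systems of S is the combinatorial core of the fact that for k ≤ 8 every ℤ₂-orthogonal system of a Lagrangian RP² class is a push off system.) -/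
/-- A push off system for the class `S0` in `Λ_k`: a set of `k − 1` pairwise
orthogonal exceptional classes all of whose members pair to `0` with `S0`. -/
def PushSystem (k : ℕ) (S0 : Fin (k + 1) → ℤ) (S : Finset (Fin (k + 1) → ℤ)) : Prop :=
  S.card = k - 1 ∧ (∀ C ∈ S, IsExceptional k C) ∧
    (∀ C ∈ S, ∀ D ∈ S, C ≠ D → pairing k C D = 0) ∧
    (∀ C ∈ S, pairing k C S0 = 0)

/-- The divisor class `S = −H + 2E₁ − E₂` in `Λ_{n+2}`. -/
def divisorClass (n : ℕ) : Fin (n + 3) → ℤ :=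
  -(Hcl (n + 2)) + 2 • Ecl (n + 2) ⟨0, by omega⟩ - Ecl (n + 2) ⟨1, by omega⟩

/-- The isometry from the classes of `Λ_{n+1}` pairing evenly with `H` onto `S^⊥ ⊂ Λ_{n+2}`:
`2H ↦ 3H − 2E₁ − E₂`, `E₁ ↦ H − E₁ − E₂`, `E_i ↦ E_{i+1}` for `i ≥ 2`. The integer division by `2`
is exact on classes pairing evenly with `H`; the value elsewhere is irrelevant. -/
def toPush (n : ℕ) (x : Fin (n + 2) → ℤ) : Fin (n + 3) → ℤ :=
  Fin.cons (3 * (x 0 / 2) + x 1) (Fin.cons (-2 * (x 0 / 2) - x 1)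
    (Fin.cons (-(x 0 / 2) - x 1) fun i : Fin n => x i.succ.succ))

/-- The inverse of `toPush` on `S^⊥`, extended linearly to all of `Λ_{n+2}` by ignoring the
coefficient of `E₂`, which on `S^⊥` is determined by those of `H` and `E₁`. -/
def ofPush (n : ℕ) (y : Fin (n + 3) → ℤ) : Fin (n + 2) → ℤ :=
  Fin.cons (2 * (y 0 + y 1)) (Fin.cons (-2 * y 0 - 3 * y 1)
    fun i : Fin n => y i.succ.succ.succ)

lemma pairing_two (n : ℕ) (x y : Fin (n + 2) → ℤ) :
    pairing (n + 1) x y = x 0 * y 0 - (x 1 * y 1 + ∑ i : Fin n, x i.succ.succ * y i.succ.succ) := by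
  simp [pairing, Fin.sum_univ_succ]

lemma pairing_three (n : ℕ) (x y : Fin (n + 3) → ℤ) :
    pairing (n + 2) x y = x 0 * y 0 - (x 1 * y 1 + (x 2 * y 2 +
      ∑ i : Fin n, x i.succ.succ.succ * y i.succ.succ.succ)) := by
  simp [pairing, Fin.sum_univ_succ]

lemma pairing_Hcl (k : ℕ) (x : Fin (k + 1) → ℤ) : pairing k (Hcl k) x = x 0 := by
  simp [pairing, Hcl]

lemma divisorClass_eq (n : ℕ) :
    divisorClass n = Fin.cons (-1) (Fin.cons 2 (Fin.cons (-1) fun _ : Fin n => 0)) := by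
  funext i
  have key : divisorClass n i = -(if i = 0 then 1 else 0)
      + 2 * (if i = (0 : Fin (n + 2)).succ then 1 else 0)
      - (if i = (0 : Fin (n + 1)).succ.succ then 1 else 0) := by
    change -(Hcl (n + 2) i) + 2 • Ecl (n + 2) ⟨0, by omega⟩ i - Ecl (n + 2) ⟨1, by omega⟩ i = _
    rw [two_nsmul, two_mul]
    rfl
  rw [key]
  refine Fin.cases ?_ (fun i => ?_) i
  · simp only [Fin.cons_zero, (Fin.succ_ne_zero _).symm, if_true, if_false]; rfl
  refine Fin.cases ?_ (fun i => ?_) i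
  · simp only [Fin.cons_zero, Fin.cons_succ, Fin.succ_inj, Fin.succ_ne_zero,
      (Fin.succ_ne_zero _).symm, if_true, if_false]; rfl
  refine Fin.cases ?_ (fun i => ?_) i
  · simp only [Fin.cons_zero, Fin.cons_succ, Fin.succ_inj, Fin.succ_ne_zero, if_true, if_false]
    rfl
  · simp only [Fin.cons_succ, Fin.succ_inj, Fin.succ_ne_zero, if_false]
    rfl

lemma pairing_divisorClass (n : ℕ) (y : Fin (n + 3) → ℤ) :
    pairing (n + 2) y (divisorClass n) = -y 0 - 2 * y 1 + y 2 := by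
  rw [pairing_three, divisorClass_eq]
  have h2 : (2 : Fin (n + 3)) = (0 : Fin (n + 1)).succ.succ := rfl
  have h1 : (1 : Fin (n + 3)) = (0 : Fin (n + 2)).succ := rfl
  simp only [h2, h1, Fin.cons_succ, Fin.cons_zero, mul_zero, Finset.sum_const_zero]
  ring

section coordinates

variable (n : ℕ) (x : Fin (n + 2) → ℤ) (y : Fin (n + 3) → ℤ)

lemma toPush_zero : toPush n x 0 = 3 * (x 0 / 2) + x 1 := rfl
lemma toPush_one : toPush n x 1 = -2 * (x 0 / 2) - x 1 := rfl
lemma toPush_two : toPush n x 2 = -(x 0 / 2) - x 1 := rfl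
lemma toPush_succ (i : Fin n) : toPush n x i.succ.succ.succ = x i.succ.succ := rfl
lemma ofPush_zero : ofPush n y 0 = 2 * (y 0 + y 1) := rfl
lemma ofPush_one : ofPush n y 1 = -2 * y 0 - 3 * y 1 := rfl
lemma ofPush_succ (i : Fin n) : ofPush n y i.succ.succ = y i.succ.succ.succ := rfl

end coordinates

lemma toPush_orthogonal (n : ℕ) (x : Fin (n + 2) → ℤ) :
    pairing (n + 2) (toPush n x) (divisorClass n) = 0 := by
  rw [pairing_divisorClass, toPush_zero, toPush_one, toPush_two]
  ring

lemma ofPush_even (n : ℕ) (y : Fin (n + 3) → ℤ) :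
    (2 : ℤ) ∣ pairing (n + 1) (Hcl (n + 1)) (ofPush n y) := by
  rw [pairing_Hcl, ofPush_zero]
  exact dvd_mul_right _ _

lemma ofPush_toPush (n : ℕ) (x : Fin (n + 2) → ℤ)
    (hx : (2 : ℤ) ∣ pairing (n + 1) (Hcl (n + 1)) x) : ofPush n (toPush n x) = x := by
  rw [pairing_Hcl] at hx
  funext i
  refine Fin.cases ?_ (fun i => ?_) i
  · rw [ofPush_zero, toPush_zero, toPush_one]; omega
  refine Fin.cases ?_ (fun i => ?_) i
  · change ofPush n (toPush n x) 1 = x 1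
    rw [ofPush_one, toPush_zero, toPush_one]; ring
  · rw [ofPush_succ, toPush_succ]

lemma toPush_ofPush (n : ℕ) (y : Fin (n + 3) → ℤ)
    (hy : pairing (n + 2) y (divisorClass n) = 0) : toPush n (ofPush n y) = y := by
  rw [pairing_divisorClass] at hy
  funext i
  refine Fin.cases ?_ (fun i => ?_) i
  · rw [toPush_zero, ofPush_zero, ofPush_one]; omega
  refine Fin.cases ?_ (fun i => ?_) i
  · change toPush n (ofPush n y) 1 = y 1
    rw [toPush_one, ofPush_zero, ofPush_one]; omega
  refine Fin.cases ?_ (fun i => ?_) i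
  · change toPush n (ofPush n y) 2 = y 2
    rw [toPush_two, ofPush_zero, ofPush_one]; omega
  · rw [toPush_succ, ofPush_succ]

lemma pairing_toPush (n : ℕ) (x x' : Fin (n + 2) → ℤ)
    (hx : (2 : ℤ) ∣ pairing (n + 1) (Hcl (n + 1)) x)
    (hx' : (2 : ℤ) ∣ pairing (n + 1) (Hcl (n + 1)) x') :
    pairing (n + 2) (toPush n x) (toPush n x') = pairing (n + 1) x x' := by
  rw [pairing_Hcl] at hx hx'
  obtain ⟨m, hm⟩ := hx
  obtain ⟨m', hm'⟩ := hx'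
  have e : x 0 / 2 = m := by omega
  have e' : x' 0 / 2 = m' := by omega
  simp only [pairing_three, pairing_two, toPush_zero, toPush_one, toPush_two, toPush_succ, e, e']
  rw [hm, hm']
  ring

lemma canonical_toPush (n : ℕ) (x : Fin (n + 2) → ℤ)
    (hx : (2 : ℤ) ∣ pairing (n + 1) (Hcl (n + 1)) x) :
    pairing (n + 2) (Kcl (n + 2)) (toPush n x) = pairing (n + 1) (Kcl (n + 1)) x := by
  rw [pairing_Hcl] at hx
  obtain ⟨m, hm⟩ := hx
  have e : x 0 / 2 = m := by omega
  have h2 : (2 : Fin (n + 3)) ≠ 0 := Fin.succ_ne_zero (1 : Fin (n + 2))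
  simp only [pairing_three, pairing_two, toPush_zero, toPush_one, toPush_two, toPush_succ, e,
    Kcl, Fin.succ_ne_zero, one_ne_zero, h2, if_true, if_false]
  rw [hm]
  ring

lemma isExceptional_toPush (n : ℕ) (x : Fin (n + 2) → ℤ)
    (hx : (2 : ℤ) ∣ pairing (n + 1) (Hcl (n + 1)) x) :
    IsExceptional (n + 2) (toPush n x) ↔ IsExceptional (n + 1) x := by
  rw [IsExceptional, IsExceptional, pairing_toPush n x x hx hx, canonical_toPush n x hx]

lemma pushSystem_image (n : ℕ) (S : Finset (Fin (n + 2) → ℤ)) (hS : OrthSystemH (n + 1) S) :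
    PushSystem (n + 2) (divisorClass n) (S.image (toPush n)) := by
  obtain ⟨hcard, hexc, horth, heven⟩ := hS
  refine ⟨?_, ?_, ?_, ?_⟩
  · rw [Finset.card_image_of_injOn, hcard]
    · rfl
    · intro a ha b hb hab
      rw [← ofPush_toPush n a (heven a ha), hab, ofPush_toPush n b (heven b hb)]
  · simp only [Finset.forall_mem_image]
    exact fun x hx => (isExceptional_toPush n x (heven x hx)).2 (hexc x hx)
  · simp only [Finset.forall_mem_image]
    intro x hx x' hx' hne
    rw [pairing_toPush n x x' (heven x hx) (heven x' hx')]
    exact horth x hx x' hx' fun h => hne (by rw [h])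
  · simp only [Finset.forall_mem_image]
    exact fun x _ => toPush_orthogonal n x

lemma orthSystemH_image (n : ℕ) (T : Finset (Fin (n + 3) → ℤ))
    (hT : PushSystem (n + 2) (divisorClass n) T) :
    OrthSystemH (n + 1) (T.image (ofPush n)) := by
  obtain ⟨hcard, hexc, horth, hperp⟩ := hT
  refine ⟨?_, ?_, ?_, ?_⟩
  · rw [Finset.card_image_of_injOn, hcard]
    · rfl
    · intro a ha b hb hab
      rw [← toPush_ofPush n a (hperp a ha), hab, toPush_ofPush n b (hperp b hb)]
  · simp only [Finset.forall_mem_image]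
    intro y hy
    rw [← isExceptional_toPush n _ (ofPush_even n y), toPush_ofPush n y (hperp y hy)]
    exact hexc y hy
  · simp only [Finset.forall_mem_image]
    intro y hy y' hy' hne
    rw [← pairing_toPush n _ _ (ofPush_even n y) (ofPush_even n y'),
      toPush_ofPush n y (hperp y hy), toPush_ofPush n y' (hperp y' hy')]
    exact horth y hy y' hy' fun h => hne (by rw [h])
  · simp only [Finset.forall_mem_image]
    exact fun y _ => ofPush_even n y

lemma image_ofPush_toPush (n : ℕ) (S : Finset (Fin (n + 2) → ℤ)) (hS : OrthSystemH (n + 1) S) :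
    (S.image (toPush n)).image (ofPush n) = S := by
  rw [Finset.image_image]
  exact (Finset.image_congr fun x hx => ofPush_toPush n x (hS.2.2.2 x hx)).trans Finset.image_id

lemma image_toPush_ofPush (n : ℕ) (T : Finset (Fin (n + 3) → ℤ))
    (hT : PushSystem (n + 2) (divisorClass n) T) :
    (T.image (ofPush n)).image (toPush n) = T := by
  rw [Finset.image_image]
  exact (Finset.image_congr fun y hy => toPush_ofPush n y (hT.2.2.2 y hy)).trans Finset.image_id

theorem stmt16 (k : ℕ) (hk1 : 1 ≤ k) (hk8 : k ≤ 8) :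
    {S : Finset (Fin (k + 1) → ℤ) | OrthSystemH k S}.ncard =
      {S : Finset (Fin (k + 2) → ℤ) |
        PushSystem (k + 1)
          (-(Hcl (k + 1)) + 2 • Ecl (k + 1) ⟨0, by omega⟩ -
            Ecl (k + 1) ⟨1, by omega⟩) S}.ncard := by
  obtain ⟨n, rfl⟩ : ∃ n, k = n + 1 := ⟨k - 1, by omega⟩
  change _ = {S | PushSystem (n + 2) (divisorClass n) S}.ncard
  refine Set.ncard_congr (fun S _ => S.image (toPush n)) (fun S hS => pushSystem_image n S hS) ?_ ?_
  · intro S S' hS hS' h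
    rw [← image_ofPush_toPush n S hS, ← image_ofPush_toPush n S' hS']
    exact congrArg (Finset.image (ofPush n)) h
  · exact fun T hT => ⟨T.image (ofPush n), orthSystemH_image n T hT, image_toPush_ofPush n T hT⟩
end

section
/- Let k ≥ 3. Let M be the lattice ℤ^{k+1} with ordered basis (H, U₁, U₂, U₃, E₄, …, E_k) and pairing of signature (1, k) diagonal in this basis (⟨H,H⟩ = 1, all other basis vectors of square −1, distinct basis vectors orthogonal), and let 𝓛 ⊂ M be the sublattice of classes a·H − t₁U₁ − t₂U₂ − t₃U₃ − Σ_{i≥4} b_iE_i with t₁ + t₂ + t₃ even. Define ι : 𝓛 → Λ_{k+1} (with basis (H′, E₀′, E₁′, …, E_k′)) by ι(a·H − t₁U₁ − t₂U₂ − t₃U₃ − Σ_{i≥4} b_iE_i) = a·H′ − ((−t₁+t₂+t₃)/2)E₀′ − ((t₁−t₂+t₃)/2)E₁′ − ((t₁+t₂−t₃)/2)E₂′ − ((t₁+t₂+t₃)/2)E₃′ − Σ_{i≥4} b_iE_i′. Then ι is a well-defined injective ℤ-linear map that preserves the intersection pairing: ⟨ι(x), ι(y)⟩ = ⟨x,y⟩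 for all x, y ∈ 𝓛. -/
/-- The sublattice `𝓛 ⊂ M` of classes `aH − t₁U₁ − t₂U₂ − t₃U₃ − Σ b_iE_i`
with `t₁ + t₂ + t₃` even (coordinates `x 1 = −t₁`, `x 2 = −t₂`, `x 3 = −t₃`). -/
def Lsub (k : ℕ) : Set (Fin (k + 1) → ℤ) :=
  {x | (2 : ℤ) ∣ (x 1 + x 2 + x 3)}

/-- The monomorphism `ι : 𝓛 → Λ_{k+1}`, in coordinates
(basis `(H′, E₀′, E₁′, …, E_k′)` on the target; on the even sublattice the
integer divisions by `2` are exact). -/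
def iotaMap (k : ℕ) (x : Fin (k + 1) → ℤ) : Fin (k + 2) → ℤ :=
  fun j =>
    if j.val = 0 then x 0
    else if j.val = 1 then (-(x 1) + x 2 + x 3) / 2
    else if j.val = 2 then (x 1 - x 2 + x 3) / 2
    else if j.val = 3 then (x 1 + x 2 - x 3) / 2
    else if j.val = 4 then (x 1 + x 2 + x 3) / 2
    else x ⟨j.val - 1, by have := j.isLt; omega⟩

/-- On the even sublattice, with `c` half of `x₁ + x₂ + x₃`, the map `ι` has a division-free
form. -/
lemma iotaMap_eq_cons (m : ℕ) (x : Fin (m + 3 + 1) → ℤ) (c : ℤ) (h : x 1 + x 2 + x 3 = 2 * c) :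
    iotaMap (m + 3) x = (Fin.cons (x 0) (Fin.cons (c - x 1) (Fin.cons (c - x 2)
      (Fin.cons (c - x 3) (Fin.cons c fun j : Fin m => x j.succ.succ.succ.succ)))) :
        Fin (m + 5) → ℤ) := by
  funext j
  refine Fin.cases ?_ (fun j => ?_) j
  · simp [iotaMap]
  refine Fin.cases ?_ (fun j => ?_) j
  · simp [iotaMap, Fin.cons_succ, Fin.cons_zero,
      -Fin.succ_zero_eq_one, -Fin.succ_one_eq_two, -Fin.succ_zero_eq_one']
    omega
  refine Fin.cases ?_ (fun j => ?_) j
  · simp [iotaMap, Fin.cons_succ, Fin.cons_zero,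
      -Fin.succ_zero_eq_one, -Fin.succ_one_eq_two, -Fin.succ_zero_eq_one']
    omega
  refine Fin.cases ?_ (fun j => ?_) j
  · simp [iotaMap, Fin.cons_succ, Fin.cons_zero,
      -Fin.succ_zero_eq_one, -Fin.succ_one_eq_two, -Fin.succ_zero_eq_one']
    omega
  refine Fin.cases ?_ (fun j => ?_) j
  · simp [iotaMap, Fin.cons_succ, Fin.cons_zero,
      -Fin.succ_zero_eq_one, -Fin.succ_one_eq_two, -Fin.succ_zero_eq_one']
    omega
  simp only [iotaMap, Fin.val_succ, Fin.cons_succ]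
  repeat rw [if_neg (by omega)]
  congr 1

/-- The pairing with the terms of `H, U₁, U₂, U₃` split off from the sum over the `E_i`. -/
lemma pairing_cons (m : ℕ) (x y : Fin (m + 3 + 1) → ℤ) :
    pairing (m + 3) x y = x 0 * y 0 - (x 1 * y 1 + x 2 * y 2 + x 3 * y 3 +
      ∑ j : Fin m, x j.succ.succ.succ.succ * y j.succ.succ.succ.succ) := by
  have h1 : (Fin.succ 0 : Fin (m + 3 + 1)) = 1 := rfl
  have h2 : (Fin.succ (Fin.succ 0) : Fin (m + 3 + 1)) = 2 := rfl
  have h3 : (Fin.succ (Fin.succ (Fin.succ 0)) : Fin (m + 3 + 1)) = 3 := rfl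
  rw [pairing, Fin.sum_univ_succ, Fin.sum_univ_succ, Fin.sum_univ_succ, h1, h2, h3]
  ring

theorem stmt17 (k : ℕ) (hk : 3 ≤ k) :
    (∀ x ∈ Lsub k, ∀ y ∈ Lsub k,
      iotaMap k (x + y) = iotaMap k x + iotaMap k y) ∧
    (∀ x ∈ Lsub k, ∀ a : ℤ, iotaMap k (a • x) = a • iotaMap k x) ∧
    Set.InjOn (iotaMap k) (Lsub k) ∧
    (∀ x ∈ Lsub k, ∀ y ∈ Lsub k,
      pairing (k + 1) (iotaMap k x) (iotaMap k y) = pairing k x y) := by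
  obtain ⟨m, rfl⟩ := Nat.exists_eq_add_of_le' hk
  refine ⟨?_, ?_, ?_, ?_⟩
  · rintro x ⟨c, hc⟩ y ⟨d, hd⟩
    rw [iotaMap_eq_cons m x c hc, iotaMap_eq_cons m y d hd,
      iotaMap_eq_cons m (x + y) (c + d) (by simp only [Pi.add_apply]; linarith)]
    funext j
    refine Fin.cases ?_ (fun j => ?_) j
    · simp
    refine Fin.cases ?_ (fun j => ?_) j
    · simp only [Pi.add_apply, Fin.cons_succ, Fin.cons_zero]; ring
    refine Fin.cases ?_ (fun j => ?_) j
    · simp only [Pi.add_apply, Fin.cons_succ, Fin.cons_zero]; ring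
    refine Fin.cases ?_ (fun j => ?_) j
    · simp only [Pi.add_apply, Fin.cons_succ, Fin.cons_zero]; ring
    refine Fin.cases ?_ (fun j => ?_) j <;> simp only [Pi.add_apply, Fin.cons_succ, Fin.cons_zero]
  · rintro x ⟨c, hc⟩ a
    rw [iotaMap_eq_cons m x c hc, iotaMap_eq_cons m (a • x) (a * c)
      (by simp only [Pi.smul_apply, smul_eq_mul]; linear_combination a * hc)]
    funext j
    refine Fin.cases ?_ (fun j => ?_) j
    · simp
    refine Fin.cases ?_ (fun j => ?_) j
    · simp only [Pi.smul_apply, smul_eq_mul, Fin.cons_succ, Fin.cons_zero]; ring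
    refine Fin.cases ?_ (fun j => ?_) j
    · simp only [Pi.smul_apply, smul_eq_mul, Fin.cons_succ, Fin.cons_zero]; ring
    refine Fin.cases ?_ (fun j => ?_) j
    · simp only [Pi.smul_apply, smul_eq_mul, Fin.cons_succ, Fin.cons_zero]; ring
    refine Fin.cases ?_ (fun j => ?_) j <;> simp only [Pi.smul_apply, smul_eq_mul, Fin.cons_succ, Fin.cons_zero]
  · rintro x ⟨c, hc⟩ y ⟨d, hd⟩ h
    rw [iotaMap_eq_cons m x c hc, iotaMap_eq_cons m y d hd] at h
    simp only [Fin.cons_inj] at h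
    obtain ⟨h0, h1, h2, h3, h4, h5⟩ := h
    funext j
    refine Fin.cases h0 (fun j => ?_) j
    refine Fin.cases (show x 1 = y 1 by linarith) (fun j => ?_) j
    refine Fin.cases (show x 2 = y 2 by linarith) (fun j => ?_) j
    refine Fin.cases (show x 3 = y 3 by linarith) (fun j => ?_) j
    exact congrFun h5 j
  · rintro x ⟨c, hc⟩ y ⟨d, hd⟩
    rw [iotaMap_eq_cons m x c hc, iotaMap_eq_cons m y d hd, pairing_cons m x y, pairing]
    simp only [Fin.sum_univ_succ, Fin.cons_succ, Fin.cons_zero]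
    linear_combination d * hc + c * hd
end
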